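/- The affine energy is dominated by the standard one: for any nonzero smooth compactly supported f on ℝⁿ and p > 1, if equality holds in the key inequality vol(K_f)^{-p/n} ∫ C_f*(∇f) dx = a₂ Z_p(f)^p, then L_f is a 0-symmetric ellipsoid (using the equality case of the L_p Busemann-Petty centroid inequality: equality holds iff the body is a 0-symmetric ellipsoid). -/

import Mathlib

open MeasureTheory Real
open scoped RealInnerProductSpace Pointwise

noncomputable section

/-- `ω_s = π^(s/2) / Γ(s/2 + 1)`. -/
def omegaR (s : ℝ) : ℝ := Real.pi ^ (s / 2) / Real.Gamma (s / 2 + 1)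

/-- `a₁ = ω_{n+p} / (ω₂ ω_n ω_{p-1})`. -/
def aOne (n : ℕ) (p : ℝ) : ℝ := omegaR (n + p) / (omegaR 2 * omegaR n * omegaR (p - 1))

/-- The `L^p` norm of the directional derivative `∇_ξ f = ⟨∇f, ξ⟩`. -/
def dirDerivLpNorm (n : ℕ) (p : ℝ) (f : EuclideanSpace ℝ (Fin n) → ℝ)
    (ξ : EuclideanSpace ℝ (Fin n)) : ℝ :=
  (∫ y, |⟪gradient f y, ξ⟫| ^ p) ^ (1 / p)

/-- `C_f*(x) = ∫_{S^{n-1}} ‖∇_ξ f‖_p^{-(n+p)} |⟨x, ξ⟩|^p dξ`. -/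
def Cfstar (n : ℕ) (p : ℝ) (f : EuclideanSpace ℝ (Fin n) → ℝ)
    (x : EuclideanSpace ℝ (Fin n)) : ℝ :=
  ∫ ξ : Metric.sphere (0 : EuclideanSpace ℝ (Fin n)) 1,
    dirDerivLpNorm n p f ξ ^ (-(n + p : ℝ)) * |⟪x, (ξ : EuclideanSpace ℝ (Fin n))⟫| ^ p
      ∂(volume : Measure (EuclideanSpace ℝ (Fin n))).toSphere

/-- The Legendre transform. -/
def legendre {n : ℕ} (C : EuclideanSpace ℝ (Fin n) → ℝ) (x : EuclideanSpace ℝ (Fin n)) : ℝ :=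
  ⨆ y : EuclideanSpace ℝ (Fin n), (⟪x, y⟫ - C y)

/-- The `L_p`-centroid body `Γ_p L`, described through its support function
`h_{Γ_p L}(v) = ((1/(a₁ vol(L))) ∫_L |⟨v, x⟩|^p dx)^{1/p}`. -/
def centroidBody (n : ℕ) (p : ℝ) (L : Set (EuclideanSpace ℝ (Fin n))) :
    Set (EuclideanSpace ℝ (Fin n)) :=
  {x | ∀ v : EuclideanSpace ℝ (Fin n),
    ⟪x, v⟫ ≤ ((aOne n p * (volume L).toReal)⁻¹ * ∫ y in L, |⟪v, y⟫| ^ p) ^ (1 / p)}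

/-- `Z_p(f) = (∫_{S^{n-1}} ‖∇_ξ f‖_p^{-n} dξ)^{-1/n}`. -/
def Zp (n : ℕ) (p : ℝ) (f : EuclideanSpace ℝ (Fin n) → ℝ) : ℝ :=
  (∫ ξ : Metric.sphere (0 : EuclideanSpace ℝ (Fin n)) 1,
      dirDerivLpNorm n p f ξ ^ (-(n : ℝ))
        ∂(volume : Measure (EuclideanSpace ℝ (Fin n))).toSphere) ^ (-(1 / (n : ℝ)))

/-- The `L^p` norms of the functions `y ↦ ⟪G y, ξ⟫` form a coercive continuous seminorm in `ξ`
when no nonzero `ξ` is almost everywhere orthogonal to `G`. -/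
theorem exists_seminorm_eq_integral_inner {E α : Type*} [NormedAddCommGroup E]
    [InnerProductSpace ℝ E] [FiniteDimensional ℝ E] [MeasurableSpace α] {μ : Measure α} {p : ℝ}
    (hp : 1 < p) {G : α → E} (hG : MemLp G (ENNReal.ofReal p) μ)
    (hnd : ∀ ξ : E, (∀ᵐ y ∂μ, ⟪G y, ξ⟫ = 0) → ξ = 0) :
    ∃ N : Seminorm ℝ E, (∀ ξ, N ξ = (∫ y, |⟪G y, ξ⟫| ^ p ∂μ) ^ (1 / p)) ∧ Continuous N ∧
      ∃ K > 0, ∀ ξ, ‖ξ‖ ≤ K * N ξ := by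
  have hp0 : 0 < p := by linarith
  have : Fact (1 ≤ ENNReal.ofReal p) := ⟨by simpa using hp.le⟩
  have hmem : ∀ ξ : E, MemLp (fun y => ⟪G y, ξ⟫) (ENNReal.ofReal p) μ := fun ξ => hG.inner_const ξ
  let T : E →ₗ[ℝ] Lp ℝ (ENNReal.ofReal p) μ :=
    { toFun := fun ξ => (hmem ξ).toLp _
      map_add' := fun ξ η => by
        rw [← MemLp.toLp_add]
        exact MemLp.toLp_congr _ _ (Filter.Eventually.of_forall fun y => inner_add_right _ _ _)
      map_smul' := fun c ξ => by
        rw [RingHom.id_apply, ← MemLp.toLp_const_smul]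
        exact MemLp.toLp_congr _ _
          (Filter.Eventually.of_forall fun y => real_inner_smul_right _ _ _) }
  have hker : LinearMap.ker T = ⊥ := by
    refine LinearMap.ker_eq_bot'.2 fun ξ hξ => hnd ξ ?_
    have h0 : (hmem ξ).toLp _ = 0 := hξ
    exact (MemLp.toLp_eq_toLp_iff (hmem ξ) MemLp.zero).1 (h0.trans (MemLp.toLp_zero _).symm)
  obtain ⟨K, hK, hT⟩ := T.exists_antilipschitzWith hker
  refine ⟨(normSeminorm ℝ _).comp T, fun ξ => ?_, ?_, K, hK, fun ξ => ?_⟩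
  · change ‖(hmem ξ).toLp _‖ = _
    rw [Lp.norm_toLp, (hmem ξ).eLpNorm_eq_integral_rpow_norm (by simpa using hp0)
      ENNReal.ofReal_ne_top, ENNReal.toReal_ofReal hp0.le, ENNReal.toReal_ofReal (by positivity)]
    simp [one_div]
  · exact T.continuous_of_finiteDimensional.norm
  · simpa using hT.le_mul_dist ξ 0

/-- The unit ball of a coercive continuous seminorm is a convex body around the origin. -/
theorem sublevel_isConvexBody {E : Type*} [NormedAddCommGroup E] [InnerProductSpace ℝ E]
    [FiniteDimensional ℝ E] [MeasurableSpace E] [BorelSpace E] {N : Seminorm ℝ E}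
    (hN : Continuous N) {K : ℝ} (hK : ∀ ξ, ‖ξ‖ ≤ K * N ξ) :
    IsCompact {ξ | N ξ ≤ 1} ∧ Convex ℝ {ξ | N ξ ≤ 1} ∧ (0 : E) ∈ interior {ξ | N ξ ≤ 1} ∧
      0 < (volume {ξ | N ξ ≤ 1}).toReal := by
  have hcomp : IsCompact {ξ | N ξ ≤ 1} := by
    refine Metric.isCompact_of_isClosed_isBounded (isClosed_le hN continuous_const) ?_
    refine (Metric.isBounded_closedBall (x := (0 : E)) (r := |K|)).subset fun ξ hξ => ?_
    have hξ' : N ξ ≤ 1 := hξ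
    rw [mem_closedBall_zero_iff]
    calc ‖ξ‖ ≤ K * N ξ := hK ξ
      _ ≤ |K| * N ξ := mul_le_mul_of_nonneg_right (le_abs_self K) (apply_nonneg N ξ)
      _ ≤ |K| * 1 := by gcongr
      _ = |K| := mul_one _
  have hint : (0 : E) ∈ interior {ξ | N ξ ≤ 1} := by
    refine mem_interior.2 ⟨{ξ | N ξ < 1}, Set.ofPred_subset_ofPred.2 fun _ h => h.le,
      isOpen_lt hN continuous_const, by simp⟩
  refine ⟨hcomp, ?_, hint, ENNReal.toReal_pos ?_ hcomp.measure_lt_top.ne⟩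
  · simpa using N.convexOn.convex_le 1
  · exact (Measure.measure_pos_of_mem_nhds _ (mem_interior_iff_mem_nhds.1 hint)).ne'

/-- Integration of a homogeneous function over the unit ball of a norm in polar coordinates. -/
theorem setIntegral_sublevel_eq_integral_sphere {n : ℕ} (hn : 1 ≤ n)
    {N : Seminorm ℝ (EuclideanSpace ℝ (Fin n))} (hN : Continuous N) {K : ℝ}
    (hK : ∀ ξ, ‖ξ‖ ≤ K * N ξ) {s : ℝ} (hs : 0 ≤ s) {g : EuclideanSpace ℝ (Fin n) → ℝ}
    (hg : Continuous g) (hhom : ∀ (r : ℝ) (x), 0 < r → g (r • x) = r ^ s * g x) :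
    ((n : ℝ) + s) * ∫ y in {y | N y ≤ 1}, g y =
      ∫ ξ : Metric.sphere (0 : EuclideanSpace ℝ (Fin n)) 1, N ξ ^ (-((n : ℝ) + s)) * g ξ
        ∂(volume : Measure (EuclideanSpace ℝ (Fin n))).toSphere := by
  obtain ⟨hcomp, -, -, -⟩ := sublevel_isConvexBody hN hK
  have : Nonempty (Fin n) := ⟨⟨0, hn⟩⟩
  set L : Set (EuclideanSpace ℝ (Fin n)) := {y | N y ≤ 1} with hL
  have hLm : MeasurableSet L := hcomp.measurableSet
  set F : EuclideanSpace ℝ (Fin n) → ℝ := L.indicator g with hF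
  have hFi : Integrable F := (hg.continuousOn.integrableOn_compact hcomp).integrable_indicator hLm
  set σ := (volume : Measure (EuclideanSpace ℝ (Fin n))).toSphere
  have hmp := (volume : Measure (EuclideanSpace ℝ (Fin n))).measurePreserving_homeomorphUnitSphereProd
  rw [finrank_euclideanSpace_fin] at hmp
  let H : Metric.sphere (0 : EuclideanSpace ℝ (Fin n)) 1 × Set.Ioi (0 : ℝ) → ℝ :=
    fun z => F ((z.2 : ℝ) • (z.1 : EuclideanSpace ℝ (Fin n)))
  have hHcomp : (fun x : ({0}ᶜ : Set (EuclideanSpace ℝ (Fin n))) =>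
      H (homeomorphUnitSphereProd _ x)) =
      fun x : ({0}ᶜ : Set (EuclideanSpace ℝ (Fin n))) => F x := by
    funext x
    have hx : ‖(x : EuclideanSpace ℝ (Fin n))‖ ≠ 0 := norm_ne_zero_iff.2 x.2
    simp [H, smul_smul, hx]
  have hHi : Integrable H (σ.prod (.volumeIoiPow (n - 1))) := by
    rw [← hmp.integrable_comp_emb (Homeomorph.measurableEmbedding _)]
    change Integrable (fun x => H (homeomorphUnitSphereProd _ x)) _
    rw [hHcomp]
    exact (integrableOn_iff_comap_subtypeVal (measurableSet_singleton _).compl).1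
      hFi.integrableOn
  have hradial : ∀ ξ : Metric.sphere (0 : EuclideanSpace ℝ (Fin n)) 1,
      ((n : ℝ) + s) * ∫ r, H (ξ, r) ∂(.volumeIoiPow (n - 1)) =
        N ξ ^ (-((n : ℝ) + s)) * g ξ := by
    intro ξ
    have hNpos : 0 < N ξ := by
      have h1 : ‖(ξ : EuclideanSpace ℝ (Fin n))‖ = 1 := by simp
      have h2 := hK ξ
      refine lt_of_le_of_ne (apply_nonneg N _) fun h0 => ?_
      rw [← h0, h1] at h2
      norm_num at h2
    have hn1 : (1 : ℝ) ≤ n := by exact_mod_cast hn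
    simp only [Measure.volumeIoiPow, ENNReal.ofReal]
    rw [integral_withDensity_eq_integral_smul
      (measurable_subtype_coe.pow_const _).real_toNNReal]
    rw [integral_subtype_comap measurableSet_Ioi fun a : ℝ => Real.toNNReal (a ^ (n - 1)) •
      F (a • (ξ : EuclideanSpace ℝ (Fin n)))]
    have hcongr : Set.EqOn (fun a : ℝ => Real.toNNReal (a ^ (n - 1)) •
        F (a • (ξ : EuclideanSpace ℝ (Fin n))))
        ((Set.Ioc 0 (N ξ)⁻¹).indicator fun a => a ^ ((n : ℝ) + s - 1) * g ξ) (Set.Ioi 0) := by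
      intro a ha
      have ha' : 0 < a := ha
      have hmem : a • (ξ : EuclideanSpace ℝ (Fin n)) ∈ L ↔ a ∈ Set.Ioc 0 (N ξ)⁻¹ := by
        rw [hL, Set.mem_ofPred_eq, map_smul_eq_mul, Real.norm_of_nonneg ha'.le, Set.mem_Ioc,
          ← one_div, le_div_iff₀ hNpos]
        exact ⟨fun h => ⟨ha', h⟩, fun h => h.2⟩
      by_cases h : a ∈ Set.Ioc 0 (N ξ)⁻¹
      · simp only [hF, Set.indicator_of_mem h, Set.indicator_of_mem (hmem.2 h)]
        rw [NNReal.smul_def, Real.coe_toNNReal _ (by positivity), hhom _ _ ha', smul_eq_mul,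
          ← mul_assoc, ← Real.rpow_natCast, ← Real.rpow_add ha', Nat.cast_sub hn]
        congr 2
        push_cast
        ring
      · simp only [hF, Set.indicator_of_notMem h, Set.indicator_of_notMem (fun h' => h (hmem.1 h')),
          smul_zero]
    rw [setIntegral_congr_fun measurableSet_Ioi hcongr,
      setIntegral_indicator measurableSet_Ioc,
      Set.inter_eq_self_of_subset_right (fun a ha => ha.1), integral_mul_const,
      ← intervalIntegral.integral_of_le (by positivity), integral_rpow (Or.inl (by linarith)),
      sub_add_cancel, Real.zero_rpow (by linarith), Real.inv_rpow hNpos.le, Real.rpow_neg hNpos.le]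
    field_simp
    ring
  calc ((n : ℝ) + s) * ∫ y in L, g y = ((n : ℝ) + s) * ∫ y, F y := by rw [integral_indicator hLm]
    _ = ((n : ℝ) + s) * ∫ z, H z ∂(σ.prod (.volumeIoiPow (n - 1))) := by
        rw [← hmp.integral_comp (Homeomorph.measurableEmbedding _), hHcomp,
          integral_subtype_comap (measurableSet_singleton _).compl F,
          restrict_compl_singleton]
    _ = ∫ ξ, ((n : ℝ) + s) * ∫ r, H (ξ, r) ∂(.volumeIoiPow (n - 1)) ∂σ := by
        rw [integral_prod _ hHi, integral_const_mul]
    _ = _ := integral_congr_ae (Filter.Eventually.of_forall hradial)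

/-- The unit sublevel set of the Legendre transform of the `p`-th power of a norm `N` is the convex
body with support function `q ^ (1 / q) * p ^ (1 / p) * N`. -/
theorem legendre_rpow_le_one_iff {n : ℕ} {p q : ℝ} (hpq : p.HolderConjugate q)
    {N : EuclideanSpace ℝ (Fin n) → ℝ} (h0 : ∀ v, 0 ≤ N v)
    (hhom : ∀ (t : ℝ) (v), 0 < t → N (t • v) = t * N v) {K : ℝ} (hK : ∀ v, ‖v‖ ≤ K * N v)
    (x : EuclideanSpace ℝ (Fin n)) :
    legendre (fun v => N v ^ p) x ≤ 1 ↔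
      ∀ v, ⟪x, v⟫ ≤ q ^ (1 / q) * p ^ (1 / p) * N v := by
  have hp := hpq.pos
  have hq := hpq.symm.pos
  have hbdd : BddAbove (Set.range fun v => ⟪x, v⟫ - N v ^ p) := by
    refine ⟨(‖x‖ * |K|) ^ q / q, ?_⟩
    rintro _ ⟨v, rfl⟩
    have h1 : ⟪x, v⟫ ≤ N v * (‖x‖ * |K|) := calc
      ⟪x, v⟫ ≤ ‖x‖ * ‖v‖ := real_inner_le_norm x v
      _ ≤ ‖x‖ * (|K| * N v) := by
        gcongr
        exact (hK v).trans (mul_le_mul_of_nonneg_right (le_abs_self K) (h0 v))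
      _ = N v * (‖x‖ * |K|) := by ring
    have h2 := Real.young_inequality_of_nonneg (h0 v) (by positivity : 0 ≤ ‖x‖ * |K|) hpq
    have h3 : N v ^ p / p ≤ N v ^ p := div_le_self (Real.rpow_nonneg (h0 v) p) hpq.lt.le
    change ⟪x, v⟫ - N v ^ p ≤ _
    linarith
  rw [legendre, ciSup_le_iff hbdd]
  constructor
  · intro h v
    rcases (h0 v).eq_or_lt with hv | hv
    · have : v = 0 := by simpa [← hv] using hK v
      simp [this, ← this ▸ hv]
    set s : ℝ := (q / p) ^ (1 / p) with hs
    have hspos : 0 < s := by positivity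
    have h1 := h ((s / N v) • v)
    rw [hhom _ _ (by positivity), div_mul_cancel₀ _ hv.ne', real_inner_smul_right, hs,
      ← Real.rpow_mul (by positivity), one_div_mul_cancel hp.ne', Real.rpow_one, ← hs] at h1
    have hsum : 1 + q / p = q := by
      have := hpq.mul_eq_add
      field_simp
      linarith
    have h2 : s * ⟪x, v⟫ ≤ q * N v := by
      have : s / N v * ⟪x, v⟫ ≤ q := by linarith
      rwa [div_mul_eq_mul_div, div_le_iff₀ hv] at this
    have h3 : q ^ (1 / q) * p ^ (1 / p) * s = q := by
      rw [hs, mul_assoc, ← Real.mul_rpow hp.le (by positivity), mul_div_cancel₀ _ hp.ne',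
        ← Real.rpow_add hq, one_div, one_div, add_comm, hpq.inv_add_inv_eq_one, Real.rpow_one]
    refine le_of_mul_le_mul_left ?_ hspos
    calc s * ⟪x, v⟫ ≤ q * N v := h2
      _ = s * (q ^ (1 / q) * p ^ (1 / p) * N v) := by linear_combination -(N v * h3)
  · intro h v
    have h1 := h v
    have h2 := Real.young_inequality_of_nonneg
      (mul_nonneg (Real.rpow_nonneg hp.le (1 / p)) (h0 v)) (Real.rpow_nonneg hq.le (1 / q)) hpq
    rw [Real.mul_rpow (by positivity) (h0 v), ← Real.rpow_mul hp.le, ← Real.rpow_mul hq.le,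
      one_div_mul_cancel hp.ne', one_div_mul_cancel hq.ne', Real.rpow_one, Real.rpow_one,
      mul_div_cancel_left₀ _ hp.ne', div_self hq.ne'] at h2
    linarith

theorem ContDiff.continuous_gradient {E : Type*} [NormedAddCommGroup E] [InnerProductSpace ℝ E]
    [CompleteSpace E] {f : E → ℝ} (hf : ContDiff ℝ (⊤ : ℕ∞) f) : Continuous (gradient f) :=
  (InnerProductSpace.toDual ℝ E).symm.continuous.comp (hf.continuous_fderiv (by simp))

theorem HasCompactSupport.gradient {E : Type*} [NormedAddCommGroup E] [InnerProductSpace ℝ E]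
    [CompleteSpace E] {f : E → ℝ} (hf : HasCompactSupport f) : HasCompactSupport (gradient f) :=
  (hf.fderiv (𝕜 := ℝ)).comp_left (g := (InnerProductSpace.toDual ℝ E).symm) (map_zero _)

/-- A nonzero compactly supported function is not constant along any direction. -/
theorem eq_zero_of_ae_inner_gradient_eq_zero {E : Type*} [NormedAddCommGroup E]
    [InnerProductSpace ℝ E] [FiniteDimensional ℝ E] [MeasurableSpace E] [BorelSpace E]
    {f : E → ℝ} (hf : ContDiff ℝ (⊤ : ℕ∞) f) (hsupp : HasCompactSupport f) (hne : f ≠ 0) (ξ : E)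
    (h : ∀ᵐ y, ⟪gradient f y, ξ⟫ = 0) : ξ = 0 := by
  by_contra hξ
  have hall : (fun y => ⟪gradient f y, ξ⟫) = fun _ => 0 :=
    Continuous.ae_eq_iff_eq volume (hf.continuous_gradient.inner continuous_const)
      continuous_const |>.1 h
  refine hne (funext fun x => ?_)
  have hder : ∀ t : ℝ, HasDerivAt (fun t : ℝ => f (x + t • ξ)) 0 t := fun t => by
    have h1 : HasDerivAt (fun t : ℝ => x + t • ξ) ξ t := by
      simpa using ((hasDerivAt_id t).smul_const ξ).const_add x
    have h2 := ((hf.differentiable (by simp)) (x + t • ξ)).hasFDerivAt.comp_hasDerivAt t h1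
    have h3 : fderiv ℝ f (x + t • ξ) ξ = 0 := by
      rw [← inner_gradient_left]
      exact congrFun hall (x + t • ξ)
    rwa [h3] at h2
  obtain ⟨R, hR⟩ := hsupp.isCompact.isBounded.subset_closedBall (0 : E)
  have hconst := is_const_of_deriv_eq_zero (fun t => (hder t).differentiableAt)
    (fun t => (hder t).deriv) 0 ((|R| + ‖x‖ + 1) / ‖ξ‖)
  simp only [zero_smul, add_zero] at hconst
  rw [hconst, Pi.zero_apply]
  refine image_eq_zero_of_notMem_tsupport fun hmem => ?_
  have h1 := hR hmem
  rw [mem_closedBall_zero_iff] at h1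
  set t := (|R| + ‖x‖ + 1) / ‖ξ‖ with ht
  have h2 : ‖t • ξ‖ = |R| + ‖x‖ + 1 := by
    rw [norm_smul, Real.norm_of_nonneg (by positivity), ht,
      div_mul_cancel₀ _ (norm_ne_zero_iff.2 hξ)]
  have h3 : ‖t • ξ‖ ≤ ‖x + t • ξ‖ + ‖x‖ := by
    simpa using norm_sub_le (x + t • ξ) x
  linarith [le_abs_self R]

theorem omegaR_pos {s : ℝ} (hs : 0 ≤ s) : 0 < omegaR s :=
  div_pos (Real.rpow_pos_of_pos Real.pi_pos _) (Real.Gamma_pos_of_pos (by linarith))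

theorem aOne_pos (n : ℕ) {p : ℝ} (hp : 1 < p) : 0 < aOne n p := by
  have h1 : 0 < omegaR (n + p) := omegaR_pos (by positivity)
  have h2 : 0 < omegaR 2 := omegaR_pos (by norm_num)
  have h3 : 0 < omegaR n := omegaR_pos (by positivity)
  have h4 : 0 < omegaR (p - 1) := omegaR_pos (by linarith)
  exact div_pos h1 (by positivity)

/-- The anisotropic energy of `f` with respect to `C_f*` equals `∫ ‖∇_ξ f‖_p^{-n} dξ`. -/
theorem integral_Cfstar_gradient {n : ℕ} {p : ℝ} (hp : 1 < p)
    {f : EuclideanSpace ℝ (Fin n) → ℝ} (hf : ContDiff ℝ (⊤ : ℕ∞) f) (hsupp : HasCompactSupport f)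
    (hcont : Continuous (dirDerivLpNorm n p f))
    (hpos : ∀ ξ ∈ Metric.sphere (0 : EuclideanSpace ℝ (Fin n)) 1, 0 < dirDerivLpNorm n p f ξ) :
    ∫ x, Cfstar n p f (gradient f x) =
      ∫ ξ : Metric.sphere (0 : EuclideanSpace ℝ (Fin n)) 1, dirDerivLpNorm n p f ξ ^ (-(n : ℝ))
        ∂(volume : Measure (EuclideanSpace ℝ (Fin n))).toSphere := by
  have hp0 : 0 < p := by linarith
  have hc : Continuous fun z : EuclideanSpace ℝ (Fin n) ×
      Metric.sphere (0 : EuclideanSpace ℝ (Fin n)) 1 =>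
      dirDerivLpNorm n p f z.2 ^ (-(n + p : ℝ)) *
        |⟪gradient f z.1, (z.2 : EuclideanSpace ℝ (Fin n))⟫| ^ p := by
    refine Continuous.mul ?_ ?_
    · exact (hcont.comp (continuous_subtype_val.comp continuous_snd)).rpow_const
        fun z => Or.inl (hpos _ z.2.2).ne'
    · exact (((hf.continuous_gradient.comp continuous_fst).inner
        (continuous_subtype_val.comp continuous_snd)).abs).rpow_const fun z => Or.inr hp0.le
  have hcs : HasCompactSupport fun z : EuclideanSpace ℝ (Fin n) ×
      Metric.sphere (0 : EuclideanSpace ℝ (Fin n)) 1 =>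
      dirDerivLpNorm n p f z.2 ^ (-(n + p : ℝ)) *
        |⟪gradient f z.1, (z.2 : EuclideanSpace ℝ (Fin n))⟫| ^ p := by
    refine HasCompactSupport.intro (hsupp.gradient.isCompact.prod isCompact_univ) fun z hz => ?_
    have : gradient f z.1 = 0 :=
      image_eq_zero_of_notMem_tsupport fun h => hz ⟨h, Set.mem_univ _⟩
    simp [this, Real.zero_rpow hp0.ne']
  unfold Cfstar
  rw [integral_integral_swap (hc.integrable_of_hasCompactSupport hcs)]
  refine integral_congr_ae (Filter.Eventually.of_forall fun ξ => ?_)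
  have hξ := hpos ξ ξ.2
  have hpow : ∫ y, |⟪gradient f y, (ξ : EuclideanSpace ℝ (Fin n))⟫| ^ p =
      dirDerivLpNorm n p f ξ ^ p := by
    rw [dirDerivLpNorm, ← Real.rpow_mul (integral_nonneg fun y => by positivity),
      one_div_mul_cancel hp0.ne', Real.rpow_one]
  change ∫ y, dirDerivLpNorm n p f ξ ^ (-(n + p : ℝ)) *
    |⟪gradient f y, (ξ : EuclideanSpace ℝ (Fin n))⟫| ^ p = _
  rw [integral_const_mul, hpow, ← Real.rpow_add hξ]
  congr 1
  ring

theorem exists_seminorm_eq_setIntegral_inner {n : ℕ} {p : ℝ} (hp : 1 < p)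
    {L : Set (EuclideanSpace ℝ (Fin n))} (hL : IsCompact L) (hvol : 0 < (volume L).toReal) :
    ∃ M : Seminorm ℝ (EuclideanSpace ℝ (Fin n)),
      (∀ v, M v = (∫ y in L, |⟪v, y⟫| ^ p) ^ (1 / p)) ∧ ∃ K > 0, ∀ v, ‖v‖ ≤ K * M v := by
  have : IsFiniteMeasure (volume.restrict L) := ⟨by simpa using hL.measure_lt_top⟩
  obtain ⟨R, hR⟩ := hL.isBounded.subset_closedBall (0 : EuclideanSpace ℝ (Fin n))
  have hmem : MemLp (fun y : EuclideanSpace ℝ (Fin n) => y) (ENNReal.ofReal p)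
      (volume.restrict L) := by
    refine MemLp.of_bound continuous_id.aestronglyMeasurable R ?_
    filter_upwards [ae_restrict_mem hL.measurableSet] with y hy
    exact mem_closedBall_zero_iff.1 (hR hy)
  obtain ⟨M, hM, -, hK⟩ := exists_seminorm_eq_integral_inner hp hmem fun v hv => by
    by_contra hne
    have hnull : volume {y : EuclideanSpace ℝ (Fin n) | ⟪v, y⟫ = 0} = 0 := by
      have htop : LinearMap.ker (innerₛₗ ℝ v) ≠ ⊤ := fun h => by
        have : v ∈ LinearMap.ker (innerₛₗ ℝ v) := h ▸ Submodule.mem_top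
        simp [hne] at this
      exact Measure.addHaar_submodule volume _ htop
    have hL0 : volume L = 0 := by
      rw [ae_restrict_iff' hL.measurableSet] at hv
      have hv' : volume {y : EuclideanSpace ℝ (Fin n) | ¬ (y ∈ L → ⟪y, v⟫ = 0)} = 0 := hv
      refine measure_mono_null (fun y hy => ?_) (measure_union_null hnull hv')
      by_cases h : ⟪v, y⟫ = 0
      · exact Or.inl h
      · exact Or.inr fun h' => h (by rw [real_inner_comm]; exact h' hy)
    simp [hL0] at hvol
  exact ⟨M, fun v => by simp_rw [hM, real_inner_comm], hK⟩

/-- When `C` is the `p`-th power of the `p`-th moment norm of `L`, the unit sublevel set of its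
Legendre transform is a dilate of the `L_p`-centroid body of `L`. -/
theorem legendre_sublevel_eq_smul_centroidBody {n : ℕ} {p q : ℝ} (hpq : p.HolderConjugate q)
    {L : Set (EuclideanSpace ℝ (Fin n))} (hL : IsCompact L) (hvol : 0 < (volume L).toReal)
    {c : ℝ} (hc : 0 < c) :
    {x | legendre (fun v => c * ∫ y in L, |⟪v, y⟫| ^ p) x ≤ 1} =
      (q ^ (1 / q) * (p * (c * (aOne n p * (volume L).toReal))) ^ (1 / p)) •
        centroidBody n p L := by
  have hp := hpq.pos
  have hq := hpq.symm.pos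
  obtain ⟨M, hM, K, -, hK⟩ := exists_seminorm_eq_setIntegral_inner hpq.lt hL hvol
  have ha := aOne_pos n hpq.lt
  set V := (volume L).toReal with hV
  have hI : ∀ v, 0 ≤ ∫ y in L, |⟪v, y⟫| ^ p := fun v => integral_nonneg fun y => by positivity
  have hC : (fun v => c * ∫ y in L, |⟪v, y⟫| ^ p) = fun v => (c ^ (1 / p) * M v) ^ p := by
    funext v
    rw [hM, ← Real.mul_rpow hc.le (hI v), ← Real.rpow_mul (mul_nonneg hc.le (hI v)),
      one_div_mul_cancel hp.ne', Real.rpow_one]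
  set l := q ^ (1 / q) * (p * (c * (aOne n p * V))) ^ (1 / p) with hl
  have hlpos : 0 < l := by positivity
  ext x
  rw [Set.mem_smul_set_iff_inv_smul_mem₀ hlpos.ne', Set.mem_ofPred_eq, hC,
    legendre_rpow_le_one_iff hpq (K := K / c ^ (1 / p))
      (fun v => mul_nonneg (by positivity) (apply_nonneg M v))]
  · refine forall_congr' fun v => ?_
    rw [Real.mul_rpow (by positivity) (hI v), ← hM, real_inner_smul_left,
      inv_mul_le_iff₀ hlpos]
    have : l * (((aOne n p * V)⁻¹) ^ (1 / p) * M v) =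
        q ^ (1 / q) * p ^ (1 / p) * (c ^ (1 / p) * M v) := by
      have h1 : (0 : ℝ) < (aOne n p * V) ^ (1 / p) := by positivity
      rw [hl, Real.inv_rpow (by positivity), Real.mul_rpow hp.le (by positivity),
        Real.mul_rpow hc.le (by positivity)]
      field_simp
    rw [this]
  · intro t v ht
    rw [map_smul_eq_mul, Real.norm_of_nonneg ht.le]
    ring
  · intro v
    have : (0 : ℝ) < c ^ (1 / p) := by positivity
    rw [← mul_assoc, div_mul_cancel₀ _ this.ne']
    exact hK v

/-- Equality case: if equality holds in the key inequality, then (using the equality case of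
the `L_p` Busemann-Petty centroid inequality) the body `L_f` is a `0`-symmetric ellipsoid. -/
theorem key_inequality_equality_case (n : ℕ) (hn : 1 ≤ n) (p q : ℝ) (hp : 1 < p)
    (hpq : 1 / p + 1 / q = 1) (f : EuclideanSpace ℝ (Fin n) → ℝ) (hf : ContDiff ℝ (⊤ : ℕ∞) f)
    (hsupp : HasCompactSupport f) (hne : f ≠ 0)
    (hBPeq : ∀ K : Set (EuclideanSpace ℝ (Fin n)), IsCompact K → Convex ℝ K →
      (0 : EuclideanSpace ℝ (Fin n)) ∈ interior K →
      (volume (centroidBody n p K)).toReal = (volume K).toReal →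
      ∃ A : EuclideanSpace ℝ (Fin n) ≃ₗ[ℝ] EuclideanSpace ℝ (Fin n),
        K = A '' Metric.closedBall (0 : EuclideanSpace ℝ (Fin n)) 1)
    (heq : (volume {x : EuclideanSpace ℝ (Fin n) | legendre (Cfstar n p f) x ≤ 1}).toReal
        ^ (-(p / (n : ℝ))) * (∫ x, Cfstar n p f (gradient f x)) =
      (q ^ (-(p / q)) * p⁻¹) * (n : ℝ) ^ (((n : ℝ) + p) / (n : ℝ)) / (aOne n p * ((n : ℝ) + p)) *
        Zp n p f ^ p) :
    ∃ A : EuclideanSpace ℝ (Fin n) ≃ₗ[ℝ] EuclideanSpace ℝ (Fin n),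
      {ξ : EuclideanSpace ℝ (Fin n) | dirDerivLpNorm n p f ξ ≤ 1} =
        A '' Metric.closedBall (0 : EuclideanSpace ℝ (Fin n)) 1 := by
  have hp0 : 0 < p := by linarith
  have hconj : p.HolderConjugate q :=
    Real.holderConjugate_iff.2 ⟨hp, by simpa [one_div] using hpq⟩
  have hq : 0 < q := hconj.symm.pos
  have hn0 : (0 : ℝ) < n := by exact_mod_cast hn
  have hgmem : MemLp (gradient f) (ENNReal.ofReal p) volume :=
    hf.continuous_gradient.memLp_of_hasCompactSupport hsupp.gradient
  obtain ⟨N, hN, hNc, K, -, hK⟩ := exists_seminorm_eq_integral_inner hp hgmem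
    (eq_zero_of_ae_inner_gradient_eq_zero hf hsupp hne)
  have hND : dirDerivLpNorm n p f = N := funext fun ξ => (hN ξ).symm
  obtain ⟨hLc, hLconv, hLint, hLvol⟩ := sublevel_isConvexBody hNc hK
  have hNpos : ∀ ξ ∈ Metric.sphere (0 : EuclideanSpace ℝ (Fin n)) 1, 0 < N ξ := fun ξ hξ => by
    have h1 := hK ξ
    rw [mem_sphere_zero_iff_norm.1 hξ] at h1
    exact lt_of_le_of_ne (apply_nonneg N ξ) fun h => by norm_num [← h] at h1
  have hNint : ∫ ξ : Metric.sphere (0 : EuclideanSpace ℝ (Fin n)) 1, N ξ ^ (-(n : ℝ))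
      ∂(volume : Measure (EuclideanSpace ℝ (Fin n))).toSphere =
      n * (volume {ξ | N ξ ≤ 1}).toReal := by
    have h := setIntegral_sublevel_eq_integral_sphere hn hNc hK le_rfl (g := fun _ => 1)
      continuous_const (fun r x _ => by simp)
    simpa [Measure.real] using h.symm
  have henergy := integral_Cfstar_gradient hp hf hsupp (hND ▸ hNc) (hND ▸ hNpos)
  have hCf : Cfstar n p f = fun v => ((n : ℝ) + p) * ∫ y in {ξ | N ξ ≤ 1}, |⟪v, y⟫| ^ p := by
    funext v
    rw [setIntegral_sublevel_eq_integral_sphere hn hNc hK hp0.le, Cfstar, hND]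
    · exact ((continuous_const.inner continuous_id).abs).rpow_const fun _ => Or.inr hp0.le
    · intro r x hr
      rw [real_inner_smul_right, abs_mul, abs_of_pos hr, Real.mul_rpow hr.le (abs_nonneg _)]
  have hKf := legendre_sublevel_eq_smul_centroidBody hconj hLc hLvol
    (by positivity : 0 < (n : ℝ) + p)
  have ha := aOne_pos n hp
  rw [henergy, hND, hNint, Zp, hND, hNint, hCf, hKf, Measure.addHaar_smul,
    finrank_euclideanSpace_fin, ENNReal.toReal_mul] at heq
  rw [hND]
  refine hBPeq _ hLc hLconv hLint ?_
  set V := (volume {ξ | N ξ ≤ 1}).toReal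
  set W := (volume (centroidBody n p {ξ | N ξ ≤ 1})).toReal
  have hW : 0 ≤ W := ENNReal.toReal_nonneg
  set b := p * (((n : ℝ) + p) * (aOne n p * V)) with hb
  have hbpos : 0 < b := by positivity
  have hscale : (q ^ (1 / q) * b ^ (1 / p)) ^ (-p) = q ^ (-(p / q)) * b⁻¹ := by
    rw [Real.mul_rpow (by positivity) (by positivity), ← Real.rpow_mul hq.le,
      ← Real.rpow_mul hbpos.le, ← Real.rpow_neg_one b]
    congr 2 <;> field_simp
  have hl : 0 < q ^ (1 / q) * b ^ (1 / p) := by positivity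
  have hnp : (n : ℝ) ^ (((n : ℝ) + p) / n) = n * (n : ℝ) ^ (p / (n : ℝ)) := by
    rw [add_div, div_self hn0.ne', Real.rpow_add hn0, Real.rpow_one]
  rw [abs_of_pos (by positivity), ENNReal.toReal_ofReal (by positivity),
    Real.mul_rpow (by positivity) hW, ← Real.rpow_natCast, ← Real.rpow_mul hl.le,
    mul_neg, mul_div_cancel₀ _ hn0.ne', hscale, ← Real.rpow_mul (by positivity), hnp,
    neg_mul, one_div_mul_eq_div, Real.mul_rpow hn0.le hLvol.le, Real.rpow_neg hn0.le] at heq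
  have hWV : W ^ (-(p / (n : ℝ))) = V ^ (-(p / (n : ℝ))) := by
    have h1 : (0 : ℝ) < (n : ℝ) ^ (p / (n : ℝ)) := by positivity
    have h2 : 0 < q ^ (-(p / q)) := by positivity
    rw [hb] at heq
    field_simp at heq
    exact heq
  exact Real.rpow_left_injOn (neg_ne_zero.2 (div_pos hp0 hn0).ne') hW hLvol.le hWV
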